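/- Let f=(m,n,k) be an integer binary quadratic form with discriminant Δ=k²−4mn>0 not a perfect square. The period Γ(f) is non-palindromic and of odd length if and only if the class of f is antisymmetric, i.e., f is SL(2,ℤ)-equivalent to its antipodal (−n,−m,−k) but neither to its conjugate (m,n,−k) nor to its adjoint (−n,−m,k). -/

import Mathlib

/-- Iterates of the Gauss map starting from `ξ`. -/
noncomputable def gaussIter (ξ : ℝ) : ℕ → ℝ
  | 0 => ξ
  | n + 1 => 1 / (gaussIter ξ n - (⌊gaussIter ξ n⌋ : ℝ))

/-- The `n`-th partial quotient of the regular continued fraction expansion of `ξ`. -/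
noncomputable def cfTerm (ξ : ℝ) (n : ℕ) : ℤ := ⌊gaussIter ξ n⌋

/-- The continued fraction expansion of `ξ` is periodic with period length `P` from index `N`. -/
def IsEventuallyPeriodicCF (ξ : ℝ) (N P : ℕ) : Prop :=
  1 ≤ P ∧ ∀ j : ℕ, cfTerm ξ (N + j + P) = cfTerm ξ (N + j)

/-- `s` is the (minimal) period of the eventually periodic regular continued fraction
expansion of `ξ`; it is well defined up to cyclic permutation. -/
def IsCFPeriod (s : List ℤ) (ξ : ℝ) : Prop :=
  s ≠ [] ∧
  (∃ N : ℕ, ∀ j : ℕ, cfTerm ξ (N + j) = s.getD (j % s.length) 0) ∧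
  (∀ P : ℕ, 1 ≤ P → (∃ N : ℕ, IsEventuallyPeriodicCF ξ N P) → s.length ≤ P)

/-- The value of the binary quadratic form `f = (m, n, k)`, i.e. `m*x^2 + n*y^2 + k*x*y`. -/
def qval (f : ℤ × ℤ × ℤ) (x y : ℤ) : ℤ := f.1 * x ^ 2 + f.2.1 * y ^ 2 + f.2.2 * x * y

/-- The discriminant `k^2 - 4*m*n` of the form `f = (m, n, k)`. -/
def formDisc (f : ℤ × ℤ × ℤ) : ℤ := f.2.2 ^ 2 - 4 * f.1 * f.2.1

/-- `SL(2,ℤ)`-equivalence of binary quadratic forms. -/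
def SLEquiv (f g : ℤ × ℤ × ℤ) : Prop :=
  ∃ a b c d : ℤ, a * d - b * c = 1 ∧
    ∀ x y : ℤ, qval g x y = qval f (a * x + b * y) (c * x + d * y)

/-- The root with the plus sign of `m*ξ^2 + k*ξ + n = 0`, for `f = (m, n, k)`. -/
noncomputable def xiPlus (f : ℤ × ℤ × ℤ) : ℝ :=
  (-(f.2.2 : ℝ) + Real.sqrt ((formDisc f : ℤ) : ℝ)) / (2 * (f.1 : ℝ))

/-- The root with the minus sign of `m*ξ^2 + k*ξ + n = 0`, for `f = (m, n, k)`. -/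
noncomputable def xiMinus (f : ℤ × ℤ × ℤ) : ℝ :=
  (-(f.2.2 : ℝ) - Real.sqrt ((formDisc f : ℤ) : ℝ)) / (2 * (f.1 : ℝ))

/-- The conjugate `(m, n, -k)` of the form `(m, n, k)`. -/
def conjF (f : ℤ × ℤ × ℤ) : ℤ × ℤ × ℤ := (f.1, f.2.1, -f.2.2)

/-- The adjoint `(-n, -m, k)` of the form `(m, n, k)`. -/
def adjF (f : ℤ × ℤ × ℤ) : ℤ × ℤ × ℤ := (-f.2.1, -f.1, f.2.2)

/-- The antipodal `(-n, -m, -k)` of the form `(m, n, k)`. -/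
def antipF (f : ℤ × ℤ × ℤ) : ℤ × ℤ × ℤ := (-f.2.1, -f.1, -f.2.2)

/-- A form `(m, n, k)` is primitive if `gcd(m, n, k) = 1`. -/
def IsPrimitiveForm (f : ℤ × ℤ × ℤ) : Prop := Int.gcd f.1 (Int.gcd f.2.1 f.2.2) = 1

/-- A finite sequence is palindromic if some cyclic permutation of it equals its reversal. -/
def Palindromic (s : List ℤ) : Prop := ∃ t : List ℤ, List.IsRotated s t ∧ t.reverse = t

/-- A finite sequence is bipalindromic if some cyclic permutation of it is the concatenation
of two palindrome blocks each of odd length. -/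
def Bipalindromic (s : List ℤ) : Prop :=
  ∃ u v : List ℤ, List.IsRotated s (u ++ v) ∧ Odd u.length ∧ Odd v.length ∧
    u.reverse = u ∧ v.reverse = v

/-!
Let `ξ` and `ξ'` be the two roots of `f`. A form is determined by its discriminant and its first
root, so forms of equal nonsquare discriminant are equivalent iff their first roots are related by
an integral Möbius transformation of determinant `1`. By Serret's theorem, refined by a sign, an
integral Möbius transformation of determinant `e = ±1` relates two irrational numbers iff their
continued fractions have a common tail at positions `i` and `j` with `(-1) ^ (i + j) = e`.

The first roots of the antipodal, the conjugate and the adjoint of `f` are `ξ⁻¹`, `-ξ'` and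
`-ξ'⁻¹`, and both `x ↦ x⁻¹` and `x ↦ -x` change the sign `e`. Hence `f` is equivalent to its
antipodal iff `ξ` shares a tail with itself after an odd shift, that is, iff the period is odd; and
`f` is equivalent to its conjugate, respectively adjoint, iff `ξ` and `ξ'` share a tail with sign
`-1`, respectively `1`. By Galois, `-ξ'⁻¹` has the reversed period, so a common tail of `ξ` and `ξ'`
makes the period a rotation of its reversal; for an odd length it is then a palindrome. Conversely,
a palindromic period makes `ξ` and `-ξ'⁻¹` share a tail with sign `1`.
-/

/-! ### The Gauss map on irrational numbers -/

lemma gaussIter_succ (x : ℝ) (n : ℕ) : gaussIter x (n + 1) = (Int.fract (gaussIter x n))⁻¹ :=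
  one_div _

lemma gaussIter_add (x : ℝ) (i j : ℕ) : gaussIter x (i + j) = gaussIter (gaussIter x i) j := by
  induction j with
  | zero => rfl
  | succ j ih => rw [← Nat.add_assoc, gaussIter_succ, gaussIter_succ, ih]

lemma cfTerm_add (x : ℝ) (i j : ℕ) : cfTerm x (i + j) = cfTerm (gaussIter x i) j :=
  congrArg Int.floor (gaussIter_add x i j)

lemma irrational_fract {x : ℝ} (hx : Irrational x) : Irrational (Int.fract x) :=
  hx.sub_intCast ⌊x⌋

lemma fract_pos_of_irrational {x : ℝ} (hx : Irrational x) : 0 < Int.fract x :=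
  Int.fract_pos.2 (hx.ne_int _)

lemma irrational_gaussIter {x : ℝ} (hx : Irrational x) (n : ℕ) : Irrational (gaussIter x n) := by
  induction n with
  | zero => exact hx
  | succ n ih => exact gaussIter_succ x n ▸ (irrational_fract ih).inv

lemma one_lt_gaussIter_succ {x : ℝ} (hx : Irrational x) (n : ℕ) : 1 < gaussIter x (n + 1) := by
  rw [gaussIter_succ]
  exact (one_lt_inv₀ (fract_pos_of_irrational (irrational_gaussIter hx n))).2 (Int.fract_lt_one _)

lemma one_le_cfTerm_succ {x : ℝ} (hx : Irrational x) (n : ℕ) : 1 ≤ cfTerm x (n + 1) :=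
  Int.le_floor.2 (by exact_mod_cast (one_lt_gaussIter_succ hx n).le)

lemma gaussIter_eq_cfTerm_add_inv (x : ℝ) (n : ℕ) :
    gaussIter x n = cfTerm x n + (gaussIter x (n + 1))⁻¹ := by
  rw [gaussIter_succ, inv_inv, cfTerm, Int.floor_add_fract]

lemma floor_intCast_add_inv {u : ℝ} (hu : 1 < u) (q : ℤ) : ⌊q + u⁻¹⌋ = q := by
  rw [Int.floor_intCast_add, add_eq_left, Int.floor_eq_zero_iff]
  exact ⟨by positivity, inv_lt_one_of_one_lt₀ hu⟩

lemma gaussIter_one_intCast_add_inv {u : ℝ} (hu : 1 < u) (q : ℤ) :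
    gaussIter (q + u⁻¹) 1 = u := by
  change 1 / ((q + u⁻¹ : ℝ) - ⌊(q + u⁻¹ : ℝ)⌋) = u
  rw [floor_intCast_add_inv hu, add_sub_cancel_left, one_div, inv_inv]

lemma gaussIter_eq_of_recurrence {u : ℕ → ℝ} {a : ℕ → ℤ} (hu : ∀ i, 1 < u (i + 1))
    (ha : ∀ i, u i = a i + (u (i + 1))⁻¹) (n : ℕ) : gaussIter (u 0) n = u n := by
  induction n with
  | zero => rfl
  | succ n ih => rw [gaussIter_add, ih, ha n, gaussIter_one_intCast_add_inv (hu n)]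

lemma cfTerm_eq_of_recurrence {u : ℕ → ℝ} {a : ℕ → ℤ} (hu : ∀ i, 1 < u (i + 1))
    (ha : ∀ i, u i = a i + (u (i + 1))⁻¹) (n : ℕ) : cfTerm (u 0) n = a n := by
  rw [cfTerm, gaussIter_eq_of_recurrence hu ha, ha, floor_intCast_add_inv (hu n)]

lemma of_s_get?_eq_cfTerm {x : ℝ} (hx : Irrational x) (n : ℕ) :
    (GenContFract.of x).s.get? n = some ⟨1, cfTerm x (n + 1)⟩ := by
  induction n generalizing x with
  | zero =>
    rw [cfTerm, gaussIter_succ]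
    exact GenContFract.of_s_head (fract_pos_of_irrational hx).ne'
  | succ n ih =>
    have h : gaussIter x 1 = (Int.fract x)⁻¹ := gaussIter_succ x 0
    rw [GenContFract.of_s_succ, ih (irrational_fract hx).inv, ← h, ← cfTerm_add, Nat.add_comm 1]

theorem eq_of_cfTerm_eq {x y : ℝ} (hx : Irrational x) (hy : Irrational y)
    (h : cfTerm x = cfTerm y) : x = y := by
  have hof : GenContFract.of x = GenContFract.of y := by
    ext1
    · rw [GenContFract.of_h_eq_floor, GenContFract.of_h_eq_floor]
      exact congrArg Int.cast (congrFun h 0)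
    · ext1 n
      rw [of_s_get?_eq_cfTerm hx, of_s_get?_eq_cfTerm hy, h]
  exact tendsto_nhds_unique (GenContFract.of_convergence x) (hof ▸ GenContFract.of_convergence y)

/-! ### Serret's theorem -/

/-- `x` and `y` have a common tail: the `i`-th complete quotient of `x` is the `j`-th one of `y`.
The sign `e = (-1) ^ (i + j)` records the parity of the shift; it becomes the determinant of a
Möbius transformation in Serret's theorem. -/
def TailRel (e : ℤˣ) (x y : ℝ) : Prop :=
  ∃ i j : ℕ, gaussIter x i = gaussIter y j ∧ (-1) ^ (i + j) = e

namespace TailRel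

variable {e e' : ℤˣ} {x y z : ℝ}

lemma symm (h : TailRel e x y) : TailRel e y x := by
  obtain ⟨i, j, hij, he⟩ := h
  exact ⟨j, i, hij.symm, Nat.add_comm i j ▸ he⟩

lemma trans (hxy : TailRel e x y) (hyz : TailRel e' y z) : TailRel (e * e') x z := by
  obtain ⟨i, j, hij, rfl⟩ := hxy
  obtain ⟨k, l, hkl, rfl⟩ := hyz
  refine ⟨i + k, l + j, ?_, ?_⟩
  · rw [gaussIter_add, hij, ← gaussIter_add, Nat.add_comm, gaussIter_add, hkl, gaussIter_add]
  · rw [← pow_add]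
    congr 1
    ring

lemma congr_right (hyz : TailRel e' y z) : TailRel e x y ↔ TailRel (e * e') x z := by
  refine ⟨fun h => h.trans hyz, fun h => ?_⟩
  simpa [mul_assoc] using h.trans hyz.symm

lemma congr_left (hxy : TailRel e' x y) : TailRel e x z ↔ TailRel (e' * e) y z := by
  refine ⟨fun h => hxy.symm.trans h, fun h => ?_⟩
  simpa [← mul_assoc] using hxy.trans h

lemma add_intCast (x : ℝ) (q : ℤ) : TailRel 1 (x + q) x := by
  refine ⟨1, 1, ?_, rfl⟩
  rw [gaussIter_succ, gaussIter_succ, gaussIter, gaussIter, Int.fract_add_intCast]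

lemma inv_of_pos (hx : 0 < x) (hx1 : x ≠ 1) : TailRel (-1) x⁻¹ x := by
  have key : ∀ {t : ℝ}, 0 < t → t < 1 → TailRel (-1) t⁻¹ t := fun {t} h0 h1 =>
    ⟨0, 1, by rw [gaussIter_succ, gaussIter, gaussIter, Int.fract_eq_self.2 ⟨h0.le, h1⟩], rfl⟩
  rcases lt_or_gt_of_ne hx1 with h | h
  · exact key hx h
  · simpa using (key (inv_pos.2 hx) (inv_lt_one_of_one_lt₀ h)).symm

/-- With `t` the fractional part of `x`, the chain is
`-x ∼ 1 - t ∼ (1 - t)⁻¹ ∼ t / (1 - t) ∼ (1 - t) / t ∼ t⁻¹ ∼ t ∼ x`, in which every other step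
inverts a positive number and the remaining ones translate by an integer. -/
lemma neg (hx : Irrational x) : TailRel (-1) (-x) x := by
  obtain ⟨t, q, hxt, ht, ht0, ht1⟩ : ∃ (t : ℝ) (q : ℤ), x = t + q ∧ Irrational t ∧ 0 < t ∧ t < 1 :=
    ⟨Int.fract x, ⌊x⌋, (Int.fract_add_floor x).symm, irrational_fract hx,
      fract_pos_of_irrational hx, Int.fract_lt_one x⟩
  have h1t : 0 < 1 - t := sub_pos.2 ht1
  have ht' : Irrational ((1 - t) / t) := by
    rw [sub_div, div_self ht0.ne', one_div]
    exact_mod_cast ht.inv.sub_intCast 1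
  have h₁ : TailRel 1 (1 - t) (-x) := by
    convert add_intCast (-x) (q + 1) using 1
    push_cast
    linear_combination hxt
  have h₂ : TailRel (-1) (1 - t)⁻¹ (1 - t) := inv_of_pos h1t (by linarith)
  have h₃ : TailRel 1 (1 - t)⁻¹ (t / (1 - t)) := by
    convert add_intCast (t / (1 - t)) 1 using 1
    push_cast
    field_simp
    ring
  have h₄ : TailRel (-1) (t / (1 - t)) ((1 - t) / t) := by
    simpa using inv_of_pos (div_pos h1t ht0) ht'.ne_one
  have h₅ : TailRel 1 t⁻¹ ((1 - t) / t) := by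
    convert add_intCast ((1 - t) / t) 1 using 1
    push_cast
    field_simp
    ring
  have h₆ : TailRel (-1) t⁻¹ t := inv_of_pos ht0 ht1.ne
  have h₇ : TailRel 1 x t := hxt ▸ add_intCast t q
  exact ((((((h₁.symm.trans h₂.symm).trans h₃).trans h₄).trans h₅.symm).trans h₆).trans h₇.symm)

lemma inv (hx : Irrational x) : TailRel (-1) x⁻¹ x := by
  rcases lt_or_gt_of_ne hx.ne_zero with h | h
  · have hneg : TailRel (-1) x⁻¹ (-x)⁻¹ := by simpa [inv_neg] using (neg hx.inv).symm
    exact (hneg.trans (inv_of_pos (neg_pos.2 h) hx.neg.ne_one)).trans (neg hx)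
  · exact inv_of_pos h hx.ne_one

lemma of_eq_add_inv (hy : Irrational y) {q : ℤ} (h : x = q + y⁻¹) : TailRel (-1) x y := by
  rw [h, add_comm]
  exact (add_intCast y⁻¹ q).trans (inv hy)

end TailRel

/-- `x` is the image of `y` under a Möbius transformation with integer coefficients and
determinant `e`, in a form free of denominators. -/
def MoebiusRel (e : ℤˣ) (x y : ℝ) : Prop :=
  ∃ a b c d : ℤ, a * d - b * c = e ∧ x * (c * y + d) = a * y + b

namespace MoebiusRel

variable {e e' : ℤˣ} {x y z : ℝ}

lemma refl (x : ℝ) : MoebiusRel 1 x x :=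
  ⟨1, 0, 0, 1, by norm_num, by push_cast; ring⟩

lemma symm (h : MoebiusRel e x y) : MoebiusRel e y x := by
  obtain ⟨a, b, c, d, hdet, h⟩ := h
  refine ⟨d, -b, -c, a, by linear_combination hdet, ?_⟩
  push_cast
  linear_combination -h

lemma trans (hxy : MoebiusRel e x y) (hyz : MoebiusRel e' y z) : MoebiusRel (e * e') x z := by
  obtain ⟨a, b, c, d, hdet, h⟩ := hxy
  obtain ⟨a', b', c', d', hdet', h'⟩ := hyz
  refine ⟨a * a' + b * c', a * b' + b * d', c * a' + d * c', c * b' + d * d', ?_, ?_⟩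
  · rw [Units.val_mul, ← hdet, ← hdet']
    ring
  · push_cast
    linear_combination (c' * z + d') * h + (a - x * c) * h'

lemma of_eq_add_inv (hy : y ≠ 0) {q : ℤ} (h : x = q + y⁻¹) : MoebiusRel (-1) x y := by
  refine ⟨q, 1, 1, 0, by norm_num, ?_⟩
  rw [h]
  push_cast
  field_simp
  ring

lemma gaussIter_right (hx : Irrational x) (n : ℕ) : MoebiusRel ((-1) ^ n) x (gaussIter x n) := by
  induction n with
  | zero => exact refl x
  | succ n ih =>
    rw [pow_succ]
    exact ih.trans
      (of_eq_add_inv (irrational_gaussIter hx _).ne_zero (gaussIter_eq_cfTerm_add_inv x n))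

end MoebiusRel

lemma TailRel.moebiusRel {e : ℤˣ} {x y : ℝ} (hx : Irrational x) (hy : Irrational y)
    (h : TailRel e x y) : MoebiusRel e x y := by
  obtain ⟨i, j, hij, rfl⟩ := h
  rw [pow_add]
  exact (MoebiusRel.gaussIter_right hx i).trans (hij ▸ (MoebiusRel.gaussIter_right hy j).symm)

lemma tailRel_of_eq_unit_mul_add {e : ℤˣ} {x y : ℝ} (hy : Irrational y) {q : ℤ}
    (h : x = (e : ℤ) * y + q) : TailRel e x y := by
  subst h
  rcases Int.units_eq_one_or e with rfl | rfl
  · simpa using TailRel.add_intCast y q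
  · simpa using (TailRel.add_intCast (-y) q).trans (TailRel.neg hy)

/-- Euclid's algorithm on the first column `(a, c)` of the matrix: replacing `x` by
`(x - a / c)⁻¹`, where `a / c` is the integer quotient, lowers `|c|` until `c = 0`. -/
lemma MoebiusRel.tailRel {e : ℤˣ} {x y : ℝ} (hx : Irrational x) (hy : Irrational y)
    (h : MoebiusRel e x y) : TailRel e x y := by
  obtain ⟨a, b, c, d, hdet, h⟩ := h
  induction hC : c.natAbs using Nat.strong_induction_on generalizing e x a b c d with
  | _ C ih =>
  rcases eq_or_ne c 0 with rfl | hc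
  · have had : a * d = e := by linear_combination hdet
    have hdd : d * d = 1 := Int.isUnit_mul_self (isUnit_of_mul_isUnit_right (had ▸ e.isUnit))
    apply tailRel_of_eq_unit_mul_add hy (q := d * b)
    have hddR : (d : ℝ) * d = 1 := by exact_mod_cast hdd
    rw [← had]
    push_cast at h ⊢
    linear_combination d * h - x * hddR
  · have hxq : Irrational (x - (a / c : ℤ)) := hx.sub_intCast _
    have hstep : TailRel (-1) x (x - (a / c : ℤ))⁻¹ :=
      TailRel.of_eq_add_inv hxq.inv (by rw [inv_inv]; ring)
    have hmod : a % c = a - a / c * c := by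
      rw [Int.emod_def, mul_comm]
    suffices TailRel (-e) (x - (a / c : ℤ))⁻¹ y by simpa using hstep.trans this
    refine ih (a % c).natAbs ?_ hxq.inv c d (a % c) (b - a / c * d) ?_ ?_ rfl
    · have hlt := Int.emod_lt a hc
      have hnonneg := Int.emod_nonneg a hc
      omega
    · rw [hmod, Units.val_neg]
      linear_combination -hdet
    · rw [inv_mul_eq_iff_eq_mul₀ hxq.ne_zero, hmod]
      push_cast
      linear_combination -h

theorem moebiusRel_iff_tailRel {e : ℤˣ} {x y : ℝ} (hx : Irrational x) (hy : Irrational y) :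
    MoebiusRel e x y ↔ TailRel e x y :=
  ⟨MoebiusRel.tailRel hx hy, TailRel.moebiusRel hx hy⟩

/-! ### Roots of equivalent forms -/

/-- The form `(x, y) ↦ f (a * x + b * y, c * x + d * y)`. -/
def substForm (f : ℤ × ℤ × ℤ) (a b c d : ℤ) : ℤ × ℤ × ℤ :=
  (qval f a c, qval f b d, 2 * f.1 * a * b + 2 * f.2.1 * c * d + f.2.2 * (a * d + b * c))

lemma qval_substForm (f : ℤ × ℤ × ℤ) (a b c d x y : ℤ) :
    qval (substForm f a b c d) x y = qval f (a * x + b * y) (c * x + d * y) := by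
  simp only [qval, substForm]
  ring

lemma eq_of_qval_eq {f g : ℤ × ℤ × ℤ} (h : ∀ x y, qval f x y = qval g x y) : f = g := by
  have h10 := h 1 0
  have h01 := h 0 1
  have h11 := h 1 1
  simp only [qval] at h10 h01 h11
  ext <;> linarith

lemma slEquiv_iff_exists_substForm {f g : ℤ × ℤ × ℤ} :
    SLEquiv f g ↔ ∃ a b c d : ℤ, a * d - b * c = 1 ∧ g = substForm f a b c d := by
  refine exists₄_congr fun a b c d => and_congr_right fun _ => ⟨fun h => ?_, ?_⟩
  · exact eq_of_qval_eq fun x y => (h x y).trans (qval_substForm f a b c d x y).symm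
  · rintro rfl
    exact qval_substForm f a b c d

lemma formDisc_substForm (f : ℤ × ℤ × ℤ) (a b c d : ℤ) :
    formDisc (substForm f a b c d) = (a * d - b * c) ^ 2 * formDisc f := by
  simp only [formDisc, substForm, qval]
  ring

lemma formDisc_conjF (f : ℤ × ℤ × ℤ) : formDisc (conjF f) = formDisc f := by
  simp only [formDisc, conjF]
  ring

lemma formDisc_adjF (f : ℤ × ℤ × ℤ) : formDisc (adjF f) = formDisc f := by
  simp only [formDisc, adjF]
  ring

lemma formDisc_antipF (f : ℤ × ℤ × ℤ) : formDisc (antipF f) = formDisc f := by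
  simp only [formDisc, antipF]
  ring

lemma formDisc_neg (f : ℤ × ℤ × ℤ) : formDisc (-f) = formDisc f := by
  simp only [formDisc, Prod.fst_neg, Prod.snd_neg]
  ring

lemma xiPlus_neg (f : ℤ × ℤ × ℤ) : xiPlus (-f) = xiMinus f := by
  rw [xiPlus, xiMinus, formDisc_neg, Prod.snd_neg, Prod.snd_neg, Prod.fst_neg, Int.cast_neg,
    Int.cast_neg, mul_neg, ← neg_div_neg_eq]
  ring

lemma antipF_neg (f : ℤ × ℤ × ℤ) : antipF (-f) = -antipF f := rfl

lemma substForm_neg (f : ℤ × ℤ × ℤ) (a b c d : ℤ) :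
    substForm (-f) a b c d = -substForm f a b c d := by
  ext <;> simp only [substForm, qval, Prod.fst_neg, Prod.snd_neg] <;> ring

lemma xiPlus_conjF (f : ℤ × ℤ × ℤ) : xiPlus (conjF f) = -xiMinus f := by
  rw [xiPlus, xiMinus, formDisc_conjF, conjF]
  push_cast
  ring

section IrrationalDiscriminant

variable {f g : ℤ × ℤ × ℤ}

lemma sq_sqrt_formDisc (hf : Irrational √(formDisc f)) :
    √(formDisc f) ^ 2 = (f.2.2 : ℝ) ^ 2 - 4 * f.1 * f.2.1 := by
  rw [Real.sq_sqrt (by exact_mod_cast (irrational_sqrt_intCast_iff.1 hf).2)]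
  simp only [formDisc]
  push_cast
  ring

lemma fst_ne_zero (hf : Irrational √(formDisc f)) : (f.1 : ℝ) ≠ 0 := by
  intro h
  refine (irrational_sqrt_intCast_iff.1 hf).1 ⟨f.2.2, ?_⟩
  rw [formDisc, Int.cast_eq_zero.1 h]
  ring

lemma snd_ne_zero (hf : Irrational √(formDisc f)) : (f.2.1 : ℝ) ≠ 0 := by
  intro h
  refine (irrational_sqrt_intCast_iff.1 hf).1 ⟨f.2.2, ?_⟩
  rw [formDisc, Int.cast_eq_zero.1 h]
  ring

lemma sqrt_formDisc_eq_xiPlus (hf : Irrational √(formDisc f)) :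
    √(formDisc f) = 2 * f.1 * xiPlus f + f.2.2 := by
  have := fst_ne_zero hf
  rw [xiPlus]
  field_simp
  ring

lemma irrational_xiPlus (hf : Irrational √(formDisc f)) : Irrational (xiPlus f) := by
  refine Irrational.of_intCast_mul (2 * f.1) (Irrational.of_add_intCast f.2.2 ?_)
  convert hf using 1
  rw [sqrt_formDisc_eq_xiPlus hf]
  push_cast
  ring

lemma irrational_xiMinus (hf : Irrational √(formDisc f)) : Irrational (xiMinus f) :=
  xiPlus_neg f ▸ irrational_xiPlus (f := -f) ((formDisc_neg f).symm ▸ hf)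

lemma xiPlus_ne_xiMinus (hf : Irrational √(formDisc f)) : xiPlus f ≠ xiMinus f := by
  intro h
  refine hf.ne_zero ?_
  have hPlus := sqrt_formDisc_eq_xiPlus hf
  have hMinus := sqrt_formDisc_eq_xiPlus (f := -f) ((formDisc_neg f).symm ▸ hf)
  rw [xiPlus_neg, formDisc_neg, ← h] at hMinus
  simp only [Prod.fst_neg, Prod.snd_neg] at hMinus
  push_cast at hMinus
  linear_combination (hPlus + hMinus) / 2

lemma intCoeffs_eq_of_irrational {x : ℝ} (hx : Irrational x) {p q p' q' : ℤ}
    (h : p * x + q = p' * x + q') : p = p' ∧ q = q' := by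
  have hp : p = p' := by
    by_contra hne
    refine ((hx.intCast_mul (sub_ne_zero.2 hne)).add_intCast (q - q')).ne_zero ?_
    push_cast
    linear_combination h
  subst hp
  exact ⟨rfl, by exact_mod_cast add_left_cancel h⟩

lemma eq_of_xiPlus_eq (hf : Irrational √(formDisc f)) (hdisc : formDisc g = formDisc f)
    (h : xiPlus g = xiPlus f) : g = f := by
  have hg : Irrational √(formDisc g) := hdisc ▸ hf
  have hlin : (g.1 : ℝ) * √(formDisc f) + (-g.1 * f.2.2 : ℤ)
      = f.1 * √(formDisc f) + (-f.1 * g.2.2 : ℤ) := by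
    have hf' := sqrt_formDisc_eq_xiPlus hf
    have hg' := sqrt_formDisc_eq_xiPlus hg
    rw [hdisc] at hg'
    push_cast
    linear_combination g.1 * hf' - f.1 * hg' - 2 * g.1 * f.1 * h
  obtain ⟨h1, hk⟩ := intCoeffs_eq_of_irrational hf hlin
  have hf1 : f.1 ≠ 0 := by exact_mod_cast fst_ne_zero hf
  rw [h1] at hk
  have hk' : g.2.2 = f.2.2 := mul_left_cancel₀ hf1 (by linear_combination hk)
  have hn : g.2.1 = f.2.1 := by
    refine mul_left_cancel₀ hf1 ?_
    simp only [formDisc, h1, hk'] at hdisc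
    linarith
  ext <;> assumption

lemma quadratic_xiPlus_eq_zero (hf : Irrational √(formDisc f)) :
    f.1 * xiPlus f ^ 2 + f.2.2 * xiPlus f + f.2.1 = 0 := by
  have hsq := sq_sqrt_formDisc hf
  rw [sqrt_formDisc_eq_xiPlus hf] at hsq
  refine mul_left_cancel₀ (mul_ne_zero four_ne_zero (fst_ne_zero hf)) ?_
  linear_combination hsq

lemma xiPlus_substForm (hf : Irrational √(formDisc f)) {a b c d : ℤ} (hdet : a * d - b * c = 1) :
    xiPlus f * (c * xiPlus (substForm f a b c d) + d) = a * xiPlus (substForm f a b c d) + b := by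
  set g := substForm f a b c d with hg
  have hdisc : formDisc g = formDisc f := by rw [hg, formDisc_substForm, hdet, one_pow, one_mul]
  have hgirr : Irrational √(formDisc g) := hdisc ▸ hf
  have hsqrt : 2 * g.1 * xiPlus g + g.2.2 = 2 * f.1 * xiPlus f + f.2.2 := by
    rw [← sqrt_formDisc_eq_xiPlus hf, ← sqrt_formDisc_eq_xiPlus hgirr, hdisc]
  have hg1 : (g.1 : ℝ) = f.1 * a ^ 2 + f.2.1 * c ^ 2 + f.2.2 * a * c := by
    simp only [hg, substForm, qval]
    push_cast
    ring
  have hg2 : (g.2.2 : ℝ) = 2 * f.1 * a * b + 2 * f.2.1 * c * d + f.2.2 * (a * d + b * c) := by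
    simp only [hg, substForm]
    push_cast
    ring
  have hdetR : (a : ℝ) * d - b * c = 1 := by exact_mod_cast hdet
  refine mul_left_cancel₀ (mul_ne_zero two_ne_zero (fst_ne_zero hgirr)) ?_
  linear_combination (c * xiPlus f - a) * (hsqrt - hg2) + 2 * (d * xiPlus f - b) * hg1
    + 2 * c * quadratic_xiPlus_eq_zero hf
    + (2 * f.1 * a * xiPlus f + f.2.2 * c * xiPlus f + 2 * f.2.1 * c + f.2.2 * a) * hdetR

theorem slEquiv_iff_moebiusRel_xiPlus (hf : Irrational √(formDisc f))
    (hdisc : formDisc g = formDisc f) :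
    SLEquiv f g ↔ MoebiusRel 1 (xiPlus f) (xiPlus g) := by
  rw [slEquiv_iff_exists_substForm]
  refine exists₄_congr fun a b c d => and_congr_right fun hdet => ⟨?_, fun h => ?_⟩
  · rintro rfl
    exact xiPlus_substForm hf hdet
  · have h' := xiPlus_substForm hf hdet
    have hdetR : (a : ℝ) * d - b * c = 1 := by exact_mod_cast hdet
    have hdisc' : formDisc (substForm f a b c d) = formDisc f := by
      rw [formDisc_substForm, hdet, one_pow, one_mul]
    refine (eq_of_xiPlus_eq (hdisc ▸ hf) (hdisc'.trans hdisc.symm) ?_).symm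
    linear_combination (c * xiPlus (substForm f a b c d) + d) * h - (c * xiPlus g + d) * h'
      - (xiPlus (substForm f a b c d) - xiPlus g) * hdetR

theorem slEquiv_iff_tailRel_xiPlus (hf : Irrational √(formDisc f))
    (hdisc : formDisc g = formDisc f) :
    SLEquiv f g ↔ TailRel 1 (xiPlus f) (xiPlus g) := by
  rw [slEquiv_iff_moebiusRel_xiPlus hf hdisc,
    moebiusRel_iff_tailRel (irrational_xiPlus hf) (irrational_xiPlus (hdisc ▸ hf))]

lemma xiPlus_antipF (hf : Irrational √(formDisc f)) : xiPlus (antipF f) = (xiPlus f)⁻¹ := by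
  have hf1 := fst_ne_zero hf
  have hf2 := snd_ne_zero hf
  have hsq := sq_sqrt_formDisc hf
  refine eq_inv_of_mul_eq_one_left ?_
  rw [xiPlus, xiPlus, formDisc_antipF, antipF]
  push_cast
  field_simp
  linear_combination -hsq

lemma xiMinus_antipF (hf : Irrational √(formDisc f)) : xiMinus (antipF f) = (xiMinus f)⁻¹ := by
  rw [← xiPlus_neg, ← xiPlus_neg, ← antipF_neg, xiPlus_antipF ((formDisc_neg f).symm ▸ hf)]

lemma xiPlus_adjF (hf : Irrational √(formDisc f)) : xiPlus (adjF f) = -(xiMinus f)⁻¹ := by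
  rw [← xiMinus_antipF hf, xiPlus, xiMinus, formDisc_adjF, formDisc_antipF, adjF, antipF]
  push_cast
  ring

lemma slEquiv_antipF_iff (hf : Irrational √(formDisc f)) :
    SLEquiv f (antipF f) ↔ TailRel (-1) (xiPlus f) (xiPlus f) := by
  rw [slEquiv_iff_tailRel_xiPlus hf (formDisc_antipF f), xiPlus_antipF hf,
    (TailRel.inv (irrational_xiPlus hf)).congr_right, one_mul]

lemma slEquiv_conjF_iff (hf : Irrational √(formDisc f)) :
    SLEquiv f (conjF f) ↔ TailRel (-1) (xiPlus f) (xiMinus f) := by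
  rw [slEquiv_iff_tailRel_xiPlus hf (formDisc_conjF f), xiPlus_conjF,
    (TailRel.neg (irrational_xiMinus hf)).congr_right, one_mul]

lemma tailRel_neg_inv {x : ℝ} (hx : Irrational x) : TailRel 1 (-x⁻¹) x :=
  (TailRel.neg hx.inv).trans (TailRel.inv hx)

lemma slEquiv_adjF_iff (hf : Irrational √(formDisc f)) :
    SLEquiv f (adjF f) ↔ TailRel 1 (xiPlus f) (xiMinus f) := by
  rw [slEquiv_iff_tailRel_xiPlus hf (formDisc_adjF f), xiPlus_adjF hf,
    (tailRel_neg_inv (irrational_xiMinus hf)).congr_right, one_mul]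

end IrrationalDiscriminant

/-! ### Periodic sequences and their periods -/

/-- The sequence `a` is the infinite repetition of the nonempty list `s`. Optional indexing makes
the definition unsatisfiable for the empty list. -/
def Repeats {α : Type*} (s : List α) (a : ℕ → α) : Prop := ∀ j, s[j % s.length]? = some (a j)

lemma pred_mul_succ_mod {L : ℕ} (hL : 0 < L) (j : ℕ) :
    (L - 1) * (j + 1) % L = L - 1 - j % L := by
  obtain ⟨k, rfl⟩ := Nat.exists_eq_add_of_lt hL
  rw [Nat.zero_add, Nat.add_sub_cancel]
  have hj := Nat.div_add_mod j (k + 1)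
  have hle : j % (k + 1) ≤ k := Nat.le_of_lt_succ (Nat.mod_lt j k.succ_pos)
  generalize j / (k + 1) = d, j % (k + 1) = r at hj hle ⊢
  have hsplit : k * (j + 1) = (k + 1) * (k * d + r) + (k - r) := by
    zify [hle] at hj ⊢
    linear_combination -(k : ℤ) * hj
  rw [hsplit, Nat.mul_add_mod, Nat.mod_eq_of_lt (by omega)]

namespace Repeats

variable {α : Type*} {s t : List α} {a b : ℕ → α}

lemma length_pos (h : Repeats s a) : 0 < s.length := by
  obtain ⟨hlt, -⟩ := List.getElem?_eq_some_iff.1 (h 0)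
  exact Nat.zero_lt_of_lt hlt

lemma apply_add_length (h : Repeats s a) (j : ℕ) : a (j + s.length) = a j :=
  Option.some_injective _ (by rw [← h, ← h, Nat.add_mod_right])

lemma seq_unique (ha : Repeats s a) (hb : Repeats s b) : a = b :=
  funext fun j => Option.some_injective _ ((ha j).symm.trans (hb j))

lemma list_unique (hs : Repeats s a) (ht : Repeats t a) (hlen : s.length = t.length) : s = t := by
  refine List.ext_getElem? fun j => ?_
  rcases lt_or_ge j s.length with hj | hj
  · have hsj := hs j
    have htj := ht j
    rw [Nat.mod_eq_of_lt hj] at hsj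
    rw [Nat.mod_eq_of_lt (hlen ▸ hj)] at htj
    rw [hsj, htj]
  · rw [List.getElem?_eq_none hj, List.getElem?_eq_none (hlen ▸ hj)]

lemma rotate (h : Repeats s a) (r : ℕ) : Repeats (s.rotate r) (fun j => a (r + j)) := fun j => by
  rw [List.length_rotate, List.getElem?_rotate (Nat.mod_lt j h.length_pos), Nat.mod_add_mod,
    h, Nat.add_comm]

lemma isRotated (hs : Repeats s a) (ht : Repeats t b) (hlen : s.length = t.length) {i j : ℕ}
    (h : ∀ n, a (i + n) = b (j + n)) : s ~r t := by
  have hrot : s.rotate i = t.rotate j :=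
    list_unique (hs.rotate i) (funext h ▸ ht.rotate j) (by simpa using hlen)
  exact (hrot ▸ ⟨i, rfl⟩ : s ~r t.rotate j).trans (List.IsRotated.symm ⟨j, rfl⟩)

/-- Multiplying indices by `s.length - 1` negates them modulo `s.length`. -/
lemma reverse (h : Repeats s a) :
    Repeats s.reverse (fun j => a ((s.length - 1) * (j + 1))) := fun j => by
  rw [List.length_reverse, List.getElem?_reverse (Nat.mod_lt j h.length_pos), ← h,
    pred_mul_succ_mod h.length_pos]

end Repeats

/-- If reversing is rotating by `r`, then the rotation by `q` is a palindrome as soon as `2 * q`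
and `r` agree modulo the length. -/
lemma palindromic_of_isRotated_reverse {s : List ℤ} (hodd : Odd s.length) (h : s ~r s.reverse) :
    Palindromic s := by
  obtain ⟨r, hr⟩ := h
  obtain ⟨q, hq⟩ : ∃ q, q + q ≡ r [MOD s.length] := by
    obtain ⟨c, hc⟩ := hodd
    refine ⟨r * (c + 1), ?_⟩
    have hqq : r * (c + 1) + r * (c + 1) = s.length * r + r := by
      rw [hc]
      ring
    rw [hqq]
    exact Nat.mul_add_mod _ _ _
  have hmod : r + (s.length - q % s.length) ≡ q [MOD s.length] := by
    refine Nat.ModEq.add_right_cancel' q (Nat.ModEq.trans ?_ hq.symm)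
    calc r + (s.length - q % s.length) + q
        ≡ r + (s.length - q % s.length) + q % s.length [MOD s.length] :=
          (Nat.mod_modEq q _).symm.add_left _
      _ = r + s.length := by
          rw [Nat.add_assoc, Nat.sub_add_cancel (Nat.mod_lt q hodd.pos).le]
      _ ≡ r [MOD s.length] := Nat.add_mod_right _ _
  refine ⟨s.rotate q, ⟨q, rfl⟩, ?_⟩
  rw [List.reverse_rotate, ← hr, List.rotate_rotate, ← List.rotate_mod, hmod, List.rotate_mod]

lemma IsCFPeriod.exists_repeats {s : List ℤ} {x : ℝ} (h : IsCFPeriod s x) :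
    ∃ N, Repeats s (fun j => cfTerm x (N + j)) := by
  obtain ⟨hne, ⟨N, hN⟩, -⟩ := h
  refine ⟨N, fun j => ?_⟩
  dsimp only
  rw [hN, List.getD_eq_getElem?_getD,
    List.getElem?_eq_getElem (Nat.mod_lt j (List.length_pos_iff.2 hne)), Option.getD_some]

lemma IsCFPeriod.length_dvd {s : List ℤ} {x : ℝ} (h : IsCFPeriod s x) {M P : ℕ}
    (hP : IsEventuallyPeriodicCF x M P) : s.length ∣ P := by
  obtain ⟨N, hN⟩ := h.exists_repeats
  refine Nat.dvd_of_mod_eq_zero (of_not_not fun hr => ?_)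
  refine (Nat.mod_lt P hN.length_pos).not_ge (h.2.2 _ (Nat.one_le_iff_ne_zero.2 hr) ?_)
  refine ⟨N + M, Nat.one_le_iff_ne_zero.2 hr, fun j => ?_⟩
  have hper : Function.Periodic (fun j => cfTerm x (N + j)) s.length := hN.apply_add_length
  calc cfTerm x (N + M + j + P % s.length)
      = cfTerm x (N + (M + j + P % s.length)) := by ring_nf
    _ = cfTerm x (N + (M + j + P % s.length + P / s.length * s.length)) :=
      (hper.nat_mul (P / s.length) _).symm
    _ = cfTerm x (M + (N + j) + P) := by
      congr 1
      have hP' := Nat.mod_add_div' P s.length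
      omega
    _ = cfTerm x (N + M + j) := by rw [hP.2]; ring_nf

lemma IsCFPeriod.odd_length_iff {s : List ℤ} {x : ℝ} (hx : Irrational x) (h : IsCFPeriod s x) :
    Odd s.length ↔ TailRel (-1) x x := by
  constructor
  · intro hodd
    obtain ⟨N, hN⟩ := h.exists_repeats
    refine ⟨N, N + s.length, ?_, ?_⟩
    · refine eq_of_cfTerm_eq (irrational_gaussIter hx _) (irrational_gaussIter hx _)
        (funext fun j => ?_)
      rw [← cfTerm_add, ← cfTerm_add, Nat.add_assoc, Nat.add_comm s.length]
      exact (hN.apply_add_length j).symm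
    · rw [← Nat.add_assoc]
      exact (Even.add_odd ⟨N, rfl⟩ hodd).neg_one_pow
  · rintro ⟨i, j, hij, hsign⟩
    have hodd : Odd (i + j) := (neg_one_pow_eq_neg_one_iff_odd (by decide)).1 hsign
    wlog hle : i ≤ j generalizing i j
    · rw [Nat.add_comm] at hsign hodd
      exact this j i hij.symm hsign hodd (le_of_not_ge hle)
    obtain ⟨P, rfl⟩ := Nat.exists_eq_add_of_le hle
    have hP : Odd P := by
      rw [← Nat.add_assoc] at hodd
      exact (Nat.odd_add'.1 hodd).2 ⟨i, rfl⟩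
    refine hP.of_dvd_nat (h.length_dvd (M := i) ⟨hP.pos, fun n => ?_⟩)
    rw [Nat.add_right_comm, cfTerm_add, ← hij, ← cfTerm_add]

/-! ### Galois' theorem on reversed periods -/

/-- The Gauss map on forms: the form whose first root is the image of `xiPlus f` under the Gauss
map. Both roots undergo the same Möbius transformation. -/
noncomputable def gaussForm (f : ℤ × ℤ × ℤ) : ℤ × ℤ × ℤ := antipF (substForm f 1 ⌊xiPlus f⌋ 0 1)

lemma formDisc_substForm_shift (f : ℤ × ℤ × ℤ) (q : ℤ) :
    formDisc (substForm f 1 q 0 1) = formDisc f := by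
  rw [formDisc_substForm]
  ring

lemma formDisc_gaussForm_iterate (f : ℤ × ℤ × ℤ) (n : ℕ) :
    formDisc (gaussForm^[n] f) = formDisc f := by
  induction n with
  | zero => rfl
  | succ n ih =>
    rw [Function.iterate_succ_apply', gaussForm, formDisc_antipF, formDisc_substForm_shift, ih]

section Galois

variable {f : ℤ × ℤ × ℤ}

lemma irrational_sqrt_formDisc_iterate (hf : Irrational √(formDisc f)) (n : ℕ) :
    Irrational √(formDisc (gaussForm^[n] f)) :=
  (formDisc_gaussForm_iterate f n).symm ▸ hf

lemma xiPlus_substForm_shift (hf : Irrational √(formDisc f)) (q : ℤ) :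
    xiPlus (substForm f 1 q 0 1) = xiPlus f - q := by
  have h := xiPlus_substForm hf (a := 1) (b := q) (c := 0) (d := 1) (by norm_num)
  push_cast at h
  linear_combination -h

lemma xiMinus_substForm_shift (hf : Irrational √(formDisc f)) (q : ℤ) :
    xiMinus (substForm f 1 q 0 1) = xiMinus f - q := by
  rw [← xiPlus_neg, ← substForm_neg, xiPlus_substForm_shift ((formDisc_neg f).symm ▸ hf),
    xiPlus_neg]

lemma xiPlus_gaussForm (hf : Irrational √(formDisc f)) :
    xiPlus (gaussForm f) = (xiPlus f - ⌊xiPlus f⌋)⁻¹ := by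
  rw [gaussForm, xiPlus_antipF ((formDisc_substForm_shift f _).symm ▸ hf),
    xiPlus_substForm_shift hf]

lemma xiMinus_gaussForm (hf : Irrational √(formDisc f)) :
    xiMinus (gaussForm f) = (xiMinus f - ⌊xiPlus f⌋)⁻¹ := by
  rw [gaussForm, xiMinus_antipF ((formDisc_substForm_shift f _).symm ▸ hf),
    xiMinus_substForm_shift hf]

lemma xiPlus_gaussForm_iterate (hf : Irrational √(formDisc f)) (n : ℕ) :
    xiPlus (gaussForm^[n] f) = gaussIter (xiPlus f) n := by
  induction n with
  | zero => rfl
  | succ n ih =>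
    rw [Function.iterate_succ_apply', xiPlus_gaussForm (irrational_sqrt_formDisc_iterate hf n), ih,
      gaussIter_succ, Int.fract]

lemma floor_xiPlus_gaussForm_iterate (hf : Irrational √(formDisc f)) (n : ℕ) :
    ⌊xiPlus (gaussForm^[n] f)⌋ = cfTerm (xiPlus f) n :=
  congrArg Int.floor (xiPlus_gaussForm_iterate hf n)

lemma tailRel_gaussForm_iff (hf : Irrational √(formDisc f)) (e : ℤˣ) :
    TailRel e (xiPlus (gaussForm f)) (xiMinus (gaussForm f))
      ↔ TailRel e (xiPlus f) (xiMinus f) := by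
  have hg : Irrational √(formDisc (gaussForm f)) := irrational_sqrt_formDisc_iterate hf 1
  have hPlus : TailRel (-1) (xiPlus f) (xiPlus (gaussForm f)) :=
    TailRel.of_eq_add_inv (irrational_xiPlus hg) (q := ⌊xiPlus f⌋) (by
      rw [xiPlus_gaussForm hf, inv_inv, add_sub_cancel])
  have hMinus : TailRel (-1) (xiMinus f) (xiMinus (gaussForm f)) :=
    TailRel.of_eq_add_inv (irrational_xiMinus hg) (q := ⌊xiPlus f⌋) (by
      rw [xiMinus_gaussForm hf, inv_inv, add_sub_cancel])
  rw [hPlus.congr_left, hMinus.congr_right]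
  simp

lemma tailRel_gaussForm_iterate_iff (hf : Irrational √(formDisc f)) (e : ℤˣ) (n : ℕ) :
    TailRel e (xiPlus (gaussForm^[n] f)) (xiMinus (gaussForm^[n] f))
      ↔ TailRel e (xiPlus f) (xiMinus f) := by
  induction n with
  | zero => rfl
  | succ n ih =>
    rw [Function.iterate_succ_apply',
      tailRel_gaussForm_iff (irrational_sqrt_formDisc_iterate hf n), ih]

lemma Repeats.isPeriodicPt_gaussForm {s : List ℤ} (hf : Irrational √(formDisc f))
    (hs : Repeats s (cfTerm (xiPlus f))) : Function.IsPeriodicPt gaussForm s.length f := by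
  refine eq_of_xiPlus_eq hf (formDisc_gaussForm_iterate f _) ?_
  rw [xiPlus_gaussForm_iterate hf]
  refine eq_of_cfTerm_eq (irrational_gaussIter (irrational_xiPlus hf) _) (irrational_xiPlus hf)
    (funext fun j => ?_)
  rw [← cfTerm_add, Nat.add_comm, hs.apply_add_length]

lemma xiMinus_gaussForm_mem_Ioo (hf : Irrational √(formDisc f)) (hq : 1 ≤ ⌊xiPlus f⌋)
    (h : xiMinus f < 0) : xiMinus (gaussForm f) ∈ Set.Ioo (-1) 0 := by
  have hqR : (1 : ℝ) ≤ ⌊xiPlus f⌋ := by exact_mod_cast hq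
  have hlt : 1 < ⌊xiPlus f⌋ - xiMinus f := by linarith
  rw [xiMinus_gaussForm hf, ← neg_sub, inv_neg]
  exact ⟨neg_lt_neg (inv_lt_one_of_one_lt₀ hlt), neg_neg_of_pos (by positivity)⟩

variable {L : ℕ}

lemma one_le_cfTerm_of_isPeriodicPt (hf : Irrational √(formDisc f))
    (hper : Function.IsPeriodicPt gaussForm L f) (hL : 0 < L) (n : ℕ) :
    1 ≤ cfTerm (xiPlus f) n := by
  rw [← floor_xiPlus_gaussForm_iterate hf, ← (hper.apply_iterate n).eq,
    floor_xiPlus_gaussForm_iterate (irrational_sqrt_formDisc_iterate hf n)]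
  obtain ⟨k, rfl⟩ := Nat.exists_eq_succ_of_ne_zero hL.ne'
  exact one_le_cfTerm_succ (irrational_xiPlus (irrational_sqrt_formDisc_iterate hf n)) k

/-- If all conjugate roots along the orbit were nonnegative, `xiMinus f` would have the same
partial quotients as `xiPlus f`. -/
lemma exists_xiMinus_iterate_neg (hf : Irrational √(formDisc f))
    (hper : Function.IsPeriodicPt gaussForm L f) (hL : 0 < L) :
    ∃ n, xiMinus (gaussForm^[n] f) < 0 := by
  by_contra! hnonneg
  have hrec : ∀ n, xiMinus (gaussForm^[n] f)
      = cfTerm (xiPlus f) n + (xiMinus (gaussForm^[n + 1] f))⁻¹ := fun n => by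
    rw [Function.iterate_succ_apply', xiMinus_gaussForm (irrational_sqrt_formDisc_iterate hf n),
      inv_inv, floor_xiPlus_gaussForm_iterate hf, add_sub_cancel]
  have hone : ∀ n, 1 < xiMinus (gaussForm^[n] f) := fun n => by
    have hpos : 0 < xiMinus (gaussForm^[n + 1] f) := (hnonneg _).lt_of_ne'
      (irrational_xiMinus (irrational_sqrt_formDisc_iterate hf (n + 1))).ne_zero
    have hq : (1 : ℝ) ≤ cfTerm (xiPlus f) n := by
      exact_mod_cast one_le_cfTerm_of_isPeriodicPt hf hper hL n
    rw [hrec]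
    linarith [inv_pos.2 hpos]
  exact xiPlus_ne_xiMinus hf (eq_of_cfTerm_eq (irrational_xiPlus hf) (irrational_xiMinus hf)
    (funext fun n => (cfTerm_eq_of_recurrence (fun i => hone (i + 1)) hrec n).symm))

lemma xiMinus_mem_Ioo_of_isPeriodicPt (hf : Irrational √(formDisc f))
    (hper : Function.IsPeriodicPt gaussForm L f) (hL : 0 < L) : xiMinus f ∈ Set.Ioo (-1) 0 := by
  have hstep : ∀ n, xiMinus (gaussForm^[n] f) < 0 →
      xiMinus (gaussForm^[n + 1] f) ∈ Set.Ioo (-1) 0 := fun n hn => by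
    rw [Function.iterate_succ_apply']
    refine xiMinus_gaussForm_mem_Ioo (irrational_sqrt_formDisc_iterate hf n) ?_ hn
    rw [floor_xiPlus_gaussForm_iterate hf]
    exact one_le_cfTerm_of_isPeriodicPt hf hper hL n
  obtain ⟨n, hn⟩ := exists_xiMinus_iterate_neg hf hper hL
  have htail : ∀ i, n + 1 ≤ i → xiMinus (gaussForm^[i] f) ∈ Set.Ioo (-1) 0 := fun i hi => by
    induction i, hi using Nat.le_induction with
    | base => exact hstep n hn
    | succ i _ ih => exact hstep i ih.2
  simpa only [(hper.const_mul (n + 1)).eq] using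
    htail ((n + 1) * L) (Nat.le_mul_of_pos_right _ hL)

/-- `-(xiMinus f)⁻¹` runs through the orbit of `f` backwards, and on a periodic orbit `L - 1` steps
forwards are one step backwards. -/
lemma cfTerm_neg_inv_xiMinus (hf : Irrational √(formDisc f))
    (hper : Function.IsPeriodicPt gaussForm L f) (hL : 0 < L) (n : ℕ) :
    cfTerm (-(xiMinus f)⁻¹) n = cfTerm (xiPlus f) ((L - 1) * (n + 1)) := by
  have hone : ∀ i, 1 < -(xiMinus (gaussForm^[(L - 1) * i] f))⁻¹ := fun i => by
    obtain ⟨hlo, hhi⟩ := xiMinus_mem_Ioo_of_isPeriodicPt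
      (irrational_sqrt_formDisc_iterate hf ((L - 1) * i)) (hper.apply_iterate _) hL
    rw [← inv_neg]
    exact (one_lt_inv₀ (neg_pos.2 hhi)).2 (by linarith)
  have hback : ∀ i, gaussForm^[(L - 1) * i] f = gaussForm (gaussForm^[(L - 1) * (i + 1)] f) :=
    fun i => by
      have hsteps : (L - 1) * (i + 1) + 1 = (L - 1) * i + L := by
        rw [Nat.mul_succ, Nat.add_assoc, Nat.sub_add_cancel hL]
      rw [← Function.iterate_succ_apply' gaussForm, Nat.succ_eq_add_one, hsteps,
        Function.iterate_add_apply, hper.eq]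
  refine cfTerm_eq_of_recurrence (u := fun i => -(xiMinus (gaussForm^[(L - 1) * i] f))⁻¹)
    (a := fun i => cfTerm (xiPlus f) ((L - 1) * (i + 1))) (fun i => hone (i + 1)) (fun i => ?_) n
  rw [hback i, xiMinus_gaussForm (irrational_sqrt_formDisc_iterate hf _),
    floor_xiPlus_gaussForm_iterate hf, inv_inv, inv_neg, inv_inv]
  ring

theorem Repeats.reverse_neg_inv_xiMinus {s : List ℤ} (hf : Irrational √(formDisc f))
    (hs : Repeats s (cfTerm (xiPlus f))) : Repeats s.reverse (cfTerm (-(xiMinus f)⁻¹)) := by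
  rw [funext (cfTerm_neg_inv_xiMinus hf (hs.isPeriodicPt_gaussForm hf) hs.length_pos)]
  exact hs.reverse

end Galois

/-! ### Palindromic periods -/

section Palindromic

variable {f : ℤ × ℤ × ℤ} {s : List ℤ}

lemma Repeats.gaussForm_iterate (hf : Irrational √(formDisc f)) {n : ℕ}
    (h : Repeats s fun j => cfTerm (xiPlus f) (n + j)) :
    Repeats s (cfTerm (xiPlus (gaussForm^[n] f))) := by
  rw [xiPlus_gaussForm_iterate hf]
  simpa only [cfTerm_add] using h

lemma Repeats.tailRel_of_palindromic (hf : Irrational √(formDisc f))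
    (hs : Repeats s (cfTerm (xiPlus f))) (hpal : Palindromic s) :
    TailRel 1 (xiPlus f) (xiMinus f) := by
  obtain ⟨_, ⟨r, rfl⟩, ht⟩ := hpal
  have hg := irrational_sqrt_formDisc_iterate hf r
  have hrot := (hs.rotate r).gaussForm_iterate hf
  have hrev := hrot.reverse_neg_inv_xiMinus hg
  rw [ht] at hrev
  have hroots : xiPlus (gaussForm^[r] f) = -(xiMinus (gaussForm^[r] f))⁻¹ :=
    eq_of_cfTerm_eq (irrational_xiPlus hg) (irrational_xiMinus hg).inv.neg (hrot.seq_unique hrev)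
  rw [← tailRel_gaussForm_iterate_iff hf 1 r, hroots]
  exact tailRel_neg_inv (irrational_xiMinus hg)

lemma Repeats.palindromic_of_tailRel (hf : Irrational √(formDisc f))
    (hs : Repeats s (cfTerm (xiPlus f))) (hodd : Odd s.length) {e : ℤˣ}
    (h : TailRel e (xiPlus f) (xiMinus f)) : Palindromic s := by
  obtain ⟨i, j, hij, -⟩ := h.trans (tailRel_neg_inv (irrational_xiMinus hf)).symm
  refine palindromic_of_isRotated_reverse hodd
    (hs.isRotated (hs.reverse_neg_inv_xiMinus hf) s.length_reverse.symm
      (i := i) (j := j) fun n => ?_)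
  rw [cfTerm_add, hij, ← cfTerm_add]

theorem IsCFPeriod.tailRel_of_palindromic (hf : Irrational √(formDisc f))
    (hs : IsCFPeriod s (xiPlus f)) (hpal : Palindromic s) : TailRel 1 (xiPlus f) (xiMinus f) := by
  obtain ⟨N, hN⟩ := hs.exists_repeats
  rw [← tailRel_gaussForm_iterate_iff hf 1 N]
  exact (hN.gaussForm_iterate hf).tailRel_of_palindromic
    (irrational_sqrt_formDisc_iterate hf N) hpal

theorem IsCFPeriod.palindromic_of_tailRel (hf : Irrational √(formDisc f))
    (hs : IsCFPeriod s (xiPlus f)) (hodd : Odd s.length) {e : ℤˣ}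
    (h : TailRel e (xiPlus f) (xiMinus f)) : Palindromic s := by
  obtain ⟨N, hN⟩ := hs.exists_repeats
  exact (hN.gaussForm_iterate hf).palindromic_of_tailRel (irrational_sqrt_formDisc_iterate hf N)
    hodd ((tailRel_gaussForm_iterate_iff hf e N).2 h)

end Palindromic

/-- The period `Γ(m,n,k)` is non palindromic and odd iff the class `C(m,n,k)` is
antisymmetric. -/
theorem statement7 (m n k : ℤ)
    (hpos : 0 < formDisc (m, n, k)) (hsq : ¬ IsSquare (formDisc (m, n, k))) :
    ∀ s : List ℤ, IsCFPeriod s (xiPlus (m, n, k)) →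
      ((¬ Palindromic s ∧ Odd s.length) ↔
        (SLEquiv (m, n, k) (antipF (m, n, k)) ∧ ¬ SLEquiv (m, n, k) (conjF (m, n, k)) ∧
          ¬ SLEquiv (m, n, k) (adjF (m, n, k)))) := by
  intro s hs
  have hf : Irrational √(formDisc (m, n, k)) := irrational_sqrt_intCast_iff.2 ⟨hsq, hpos.le⟩
  rw [slEquiv_antipF_iff hf, slEquiv_conjF_iff hf, slEquiv_adjF_iff hf,
    ← hs.odd_length_iff (irrational_xiPlus hf)]
  constructor
  · rintro ⟨hpal, hodd⟩
    exact ⟨hodd, fun h => hpal (hs.palindromic_of_tailRel hf hodd h),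
      fun h => hpal (hs.palindromic_of_tailRel hf hodd h)⟩
  · rintro ⟨hodd, -, hadj⟩
    exact ⟨fun hpal => hadj (hs.tailRel_of_palindromic hf hpal), hodd⟩
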